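/- The Kullback–Leibler divergence between Cauchy densities p_{l₁,s₁} and p_{l₂,s₂}, defined as ∫ p_{l₁,s₁}(x) ln(p_{l₁,s₁}(x)/p_{l₂,s₂}(x)) dx, equals ln(((s₁+s₂)² + (l₁−l₂)²)/(4s₁s₂)). -/

import Mathlib

open MeasureTheory Real

noncomputable def cauchyPdf (l s x : ℝ) : ℝ := s / (π * (s ^ 2 + (x - l) ^ 2))

/-!
Write `z = l + i s`. For real `x`, the Cauchy density is `s / (π ‖x - conj z‖ ^ 2)`, so the ratio of
two densities is `(s₁ / s₂) ‖(x - conj z₂) / (x - conj z₁)‖ ^ 2`. The rational function inside the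
norm has its zero and its pole in the open lower half-plane, hence the logarithm of its modulus is
harmonic on the closed upper half-plane, infinity included. Integrating it against the Cauchy
density of `z₁`, which is the Poisson kernel, returns its value at `z₁`. The Cayley transform
`x = l₁ + s₁ tan (θ / 2) ↦ exp (i θ)` turns this into the mean value property on the unit circle.
-/

open Complex (I)
open Metric Set

section TangentSubstitution

variable {E : Type*} [NormedAddCommGroup E] [NormedSpace ℝ E]

theorem integral_eq_setIntegral_comp_tan (f : ℝ → E) :
    ∫ x, f x = ∫ φ in Ioo (-(π / 2)) (π / 2), (1 / cos φ ^ 2) • f (tan φ) := by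
  rw [← setIntegral_univ, ← image_tan_Ioo,
    integral_image_eq_integral_abs_deriv_smul measurableSet_Ioo
      (fun φ hφ ↦ (hasDerivAt_tan_of_mem_Ioo hφ).hasDerivWithinAt) injOn_tan]
  simp only [abs_of_nonneg (one_div_nonneg.2 (sq_nonneg (cos _)))]

theorem integral_eq_abs_smul_integral_comp_add_mul (f : ℝ → E) (l : ℝ) {s : ℝ} (hs : s ≠ 0) :
    ∫ x, f x = |s| • ∫ t, f (l + s * t) := by
  rw [Measure.integral_comp_mul_left (fun x ↦ f (l + x)), integral_add_left_eq_self f,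
    abs_inv, smul_inv_smul₀ (abs_ne_zero.2 hs)]

theorem mul_cauchyPdf_add_mul_tan (l : ℝ) {s φ : ℝ} (hs : s ≠ 0) (hφ : cos φ ≠ 0) :
    s * cauchyPdf l s (l + s * tan φ) = π⁻¹ * cos φ ^ 2 := by
  have hquad : s ^ 2 + (l + s * tan φ - l) ^ 2 = s ^ 2 * (cos φ ^ 2)⁻¹ := by
    rw [← inv_one_add_tan_sq hφ, inv_inv]
    ring
  rw [cauchyPdf, hquad]
  field_simp

theorem integral_cauchyPdf_smul (l : ℝ) {s : ℝ} (hs : 0 < s) (f : ℝ → E) :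
    ∫ x, cauchyPdf l s x • f x =
      π⁻¹ • ∫ φ in Ioo (-(π / 2)) (π / 2), f (l + s * tan φ) := by
  rw [integral_eq_abs_smul_integral_comp_add_mul _ l hs.ne', abs_of_pos hs,
    integral_eq_setIntegral_comp_tan, ← integral_smul, ← integral_smul]
  refine setIntegral_congr_fun measurableSet_Ioo fun φ hφ ↦ ?_
  have hcos : cos φ ≠ 0 := (cos_pos_of_mem_Ioo hφ).ne'
  simp only [smul_smul]
  congr 1
  calc s * (1 / cos φ ^ 2 * cauchyPdf l s (l + s * tan φ))
      = 1 / cos φ ^ 2 * (s * cauchyPdf l s (l + s * tan φ)) := by ring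
    _ = π⁻¹ := by rw [mul_cauchyPdf_add_mul_tan l hs.ne' hcos]; field_simp

theorem circleAverage_eq_setIntegral_circleMap_two_mul (F : ℂ → E) (c : ℂ) (R : ℝ) :
    circleAverage F c R =
      π⁻¹ • ∫ φ in Ioo (-(π / 2)) (π / 2), F (circleMap c R (2 * φ)) := by
  rw [circleAverage_eq_integral_add (-π),
    intervalIntegral.integral_comp_add_right fun θ ↦ F (circleMap c R θ),
    ← integral_Ioc_eq_integral_Ioo, ← intervalIntegral.integral_of_le (by linarith [pi_pos]),
    intervalIntegral.integral_comp_mul_left (fun θ ↦ F (circleMap c R θ)) two_ne_zero,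
    smul_smul, mul_inv, mul_comm π⁻¹]
  congr 2 <;> ring

end TangentSubstitution

section Cayley

/-- The Cayley transform of the real line onto the unit circle minus `-1`, normalised so that its
extension to the upper half-plane sends `l + i s` to `0`. It carries the Cauchy distribution with
parameters `l`, `s` to the uniform distribution on the circle. -/
noncomputable def cayley (l s x : ℝ) : ℂ := (s + (x - l) * I) / (s - (x - l) * I)

theorem cayley_add_mul_tan (l : ℝ) {s φ : ℝ} (hs : s ≠ 0) (hφ : cos φ ≠ 0) :
    cayley l s (l + s * tan φ) = circleMap 0 1 (2 * φ) := by
  have hs' : (s : ℂ) ≠ 0 := by exact_mod_cast hs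
  have hφ' : Complex.cos φ ≠ 0 := by exact_mod_cast hφ
  calc cayley l s (l + s * tan φ)
      = (Complex.cos φ + Complex.sin φ * I) / (Complex.cos φ - Complex.sin φ * I) := by
        rw [cayley]
        push_cast
        rw [Complex.tan_eq_sin_div_cos, add_sub_cancel_left,
          ← mul_div_mul_left _ (Complex.cos φ - _) (div_ne_zero hs' hφ')]
        congr 1 <;> field_simp
    _ = Complex.exp (φ * I) / Complex.exp (-φ * I) := by
        rw [Complex.exp_mul_I, Complex.exp_mul_I, Complex.cos_neg, Complex.sin_neg, neg_mul,
          ← sub_eq_add_neg]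
    _ = circleMap 0 1 (2 * φ) := by
        rw [← Complex.exp_sub, circleMap_zero, Complex.ofReal_one, one_mul]
        push_cast
        ring_nf

theorem integral_cauchyPdf_smul_comp_cayley {E : Type*} [NormedAddCommGroup E] [NormedSpace ℝ E]
    (l : ℝ) {s : ℝ} (hs : 0 < s) (F : ℂ → E) :
    ∫ x, cauchyPdf l s x • F (cayley l s x) = circleAverage F 0 1 := by
  rw [integral_cauchyPdf_smul l hs, circleAverage_eq_setIntegral_circleMap_two_mul]
  congr 1
  refine setIntegral_congr_fun measurableSet_Ioo fun φ hφ ↦ ?_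
  simp only [cayley_add_mul_tan l hs.ne' (cos_pos_of_mem_Ioo hφ).ne']

theorem integral_cauchyPdf_mul_log_norm_comp_cayley (l : ℝ) {s : ℝ} (hs : 0 < s) {g : ℂ → ℂ}
    (hg : AnalyticOnNhd ℂ g (closedBall 0 1)) (hg₀ : ∀ u ∈ closedBall 0 1, g u ≠ 0) :
    ∫ x, cauchyPdf l s x * log ‖g (cayley l s x)‖ = log ‖g 0‖ := by
  rw [← abs_one] at hg hg₀
  rw [← hg.circleAverage_log_norm_of_ne_zero hg₀]
  exact integral_cauchyPdf_smul_comp_cayley l hs fun u ↦ log ‖g u‖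

end Cayley

theorem add_mul_ne_zero_of_norm_lt {R : Type*} [NormedRing R] {a b u : R}
    (hab : ‖b‖ < ‖a‖) (hu : ‖u‖ ≤ 1) : a + b * u ≠ 0 := by
  intro h
  have : ‖a‖ ≤ ‖b‖ := calc
    ‖a‖ = ‖b * u‖ := by rw [eq_neg_of_add_eq_zero_left h, norm_neg]
    _ ≤ ‖b‖ * ‖u‖ := norm_mul_le b u
    _ ≤ ‖b‖ := mul_le_of_le_one_right (norm_nonneg b) hu
  exact hab.not_ge this

section DensityRatio

/-- The polynomial `z₁ - conj z₂ + (conj z₁ - conj z₂) u`, where `zⱼ = lⱼ + i sⱼ`. It is a constant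
multiple of `(x - conj z₂) / (x - conj z₁)` in the Cayley coordinate `u` of `(l₁, s₁)`. -/
noncomputable def cauchyFactor (l₁ s₁ l₂ s₂ : ℝ) (u : ℂ) : ℂ :=
  ((l₁ - l₂ : ℝ) + (s₁ + s₂ : ℝ) * I) + ((l₁ - l₂ : ℝ) + (s₂ - s₁ : ℝ) * I) * u

/-- The polynomial whose modulus on the unit circle is the ratio of two Cauchy densities, in the
Cayley coordinate of `(l₁, s₁)`. The square and the scale factor are included so that no separate
constant or factor `2` appears in the logarithm. -/
noncomputable def cauchyRatio (l₁ s₁ l₂ s₂ : ℝ) (u : ℂ) : ℂ :=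
  cauchyFactor l₁ s₁ l₂ s₂ u ^ 2 / (4 * s₁ * s₂ : ℝ)

variable (l₁ l₂ : ℝ) {s₁ s₂ : ℝ}

theorem cauchyFactor_cayley (hs₁ : s₁ ≠ 0) (s₂ x : ℝ) :
    cauchyFactor l₁ s₁ l₂ s₂ (cayley l₁ s₁ x) =
      (2 * s₁ : ℝ) * (((x - l₂ : ℝ) + s₂ * I) / (s₁ + (l₁ - x : ℝ) * I)) := by
  have hden : (s₁ - (x - l₁) * I : ℂ) ≠ 0 := fun h ↦ hs₁ (by simpa using congrArg Complex.re h)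
  have hden_eq : (s₁ + (l₁ - x : ℝ) * I : ℂ) = s₁ - (x - l₁) * I := by push_cast; ring
  rw [cauchyFactor, hden_eq, cayley, ← mul_div_assoc, ← mul_div_assoc, add_div' _ _ _ hden]
  congr 1
  push_cast
  linear_combination (-2 * s₁ * (x - l₁) : ℂ) * Complex.I_sq

theorem cauchyFactor_ne_zero (hs : 0 < s₁ * s₂) {u : ℂ} (hu : ‖u‖ ≤ 1) :
    cauchyFactor l₁ s₁ l₂ s₂ u ≠ 0 := by
  refine add_mul_ne_zero_of_norm_lt ?_ hu
  rw [Complex.norm_add_mul_I, Complex.norm_add_mul_I]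
  exact sqrt_lt_sqrt (by positivity) (by linarith)

theorem norm_cauchyRatio (hs : 0 ≤ s₁ * s₂) (u : ℂ) :
    ‖cauchyRatio l₁ s₁ l₂ s₂ u‖ = ‖cauchyFactor l₁ s₁ l₂ s₂ u‖ ^ 2 / (4 * s₁ * s₂) := by
  rw [cauchyRatio, norm_div, norm_pow, Complex.norm_of_nonneg (by linarith)]

theorem norm_cauchyRatio_cayley (hs₁ : 0 < s₁) (hs₂ : 0 < s₂) (x : ℝ) :
    ‖cauchyRatio l₁ s₁ l₂ s₂ (cayley l₁ s₁ x)‖ = cauchyPdf l₁ s₁ x / cauchyPdf l₂ s₂ x := by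
  rw [norm_cauchyRatio l₁ l₂ (mul_pos hs₁ hs₂).le, cauchyFactor_cayley l₁ l₂ hs₁.ne', norm_mul,
    norm_div, mul_pow, div_pow, Complex.norm_real, norm_eq_abs, sq_abs]
  simp only [Complex.sq_norm, Complex.normSq_add_mul_I, cauchyPdf]
  rw [← neg_sub x l₁, neg_sq]
  field_simp
  ring

theorem norm_cauchyRatio_zero (hs : 0 ≤ s₁ * s₂) :
    ‖cauchyRatio l₁ s₁ l₂ s₂ 0‖ = ((s₁ + s₂) ^ 2 + (l₁ - l₂) ^ 2) / (4 * s₁ * s₂) := by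
  rw [norm_cauchyRatio l₁ l₂ hs, cauchyFactor, mul_zero, add_zero, Complex.sq_norm,
    Complex.normSq_add_mul_I, add_comm]

theorem analyticOnNhd_cauchyRatio (s₁ s₂ : ℝ) (S : Set ℂ) :
    AnalyticOnNhd ℂ (cauchyRatio l₁ s₁ l₂ s₂) S := by
  intro u _
  unfold cauchyRatio cauchyFactor
  fun_prop

theorem cauchyRatio_ne_zero (hs : 0 < s₁ * s₂) {u : ℂ} (hu : ‖u‖ ≤ 1) :
    cauchyRatio l₁ s₁ l₂ s₂ u ≠ 0 := by
  have hden : 4 * s₁ * s₂ ≠ 0 := by linarith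
  exact div_ne_zero (pow_ne_zero 2 (cauchyFactor_ne_zero l₁ l₂ hs hu))
    (Complex.ofReal_ne_zero.2 hden)

end DensityRatio

theorem stmt_5 (l₁ l₂ s₁ s₂ : ℝ) (hs₁ : 0 < s₁) (hs₂ : 0 < s₂) :
    ∫ x : ℝ, cauchyPdf l₁ s₁ x * Real.log (cauchyPdf l₁ s₁ x / cauchyPdf l₂ s₂ x) =
      Real.log (((s₁ + s₂) ^ 2 + (l₁ - l₂) ^ 2) / (4 * s₁ * s₂)) := by
  have hs : 0 < s₁ * s₂ := mul_pos hs₁ hs₂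
  calc ∫ x : ℝ, cauchyPdf l₁ s₁ x * log (cauchyPdf l₁ s₁ x / cauchyPdf l₂ s₂ x)
      = ∫ x : ℝ, cauchyPdf l₁ s₁ x * log ‖cauchyRatio l₁ s₁ l₂ s₂ (cayley l₁ s₁ x)‖ := by
        simp only [norm_cauchyRatio_cayley l₁ l₂ hs₁ hs₂]
    _ = log ‖cauchyRatio l₁ s₁ l₂ s₂ 0‖ :=
        integral_cauchyPdf_mul_log_norm_comp_cayley l₁ hs₁
          (analyticOnNhd_cauchyRatio l₁ l₂ s₁ s₂ _)
          fun _ hu ↦ cauchyRatio_ne_zero l₁ l₂ hs (mem_closedBall_zero_iff.1 hu)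
    _ = log (((s₁ + s₂) ^ 2 + (l₁ - l₂) ^ 2) / (4 * s₁ * s₂)) := by
        rw [norm_cauchyRatio_zero l₁ l₂ hs.le]
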